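/- (Sequence Nikol'skij–Plancherel–Polya inequality with mixed norms in two variables.) Let 0 < p₁ ≤ r₁ < ∞ and 0 < p₂ ≤ r₂ < ∞ with (p₁,p₂) ≠ (r₁,r₂), let 0 < q < ∞, let A > 0, and let R₁, R₂ > 1. Then there exists a constant c > 0 such that for every sequence (f_j)_{j∈ℕ} of Schwartz functions on ℝ² satisfying supp 𝓕f_j ⊆ [−A R₁^j, A R₁^j] × [−A R₂^j, A R₂^j] for all j, one has (∫_ℝ (∫_ℝ (∑_{j=0}^∞ |f_j(x₁,x₂)|^q)^{r₁/q} dx₁)^{r₂/r₁} dx₂)^{1/r₂} ≤ c · (∫_ℝ (∫_ℝ (sup_{j∈ℕ} R₁^{j(1/p₁ − 1/r₁)} R₂^{j(1/p₂ − 1/r₂)} |f_j(x₁,x₂)|)^{p₁} dx₁)^{p₂/p₁} dx₂)^{1/p₂}, where both sides may be infinite. -/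

import Mathlib

open scoped ENNReal NNReal FourierTransform SchwartzMap
open MeasureTheory

/-- The point `(x₁, x₂)` of the Euclidean plane. -/
noncomputable def pt (x₁ x₂ : ℝ) : EuclideanSpace ℝ (Fin 2) :=
  (EuclideanSpace.equiv (Fin 2) ℝ).symm ![x₁, x₂]

/-!
On a line, the modulus of a band-limited function is dominated by its averages against every power
of Peetre's weight. This domination is inherited by positive powers (for small powers, a suitable
maximal quantity is divided out of the inequality) and by integrals over a parameter. It therefore
yields the Plancherel–Polya bounds `N_j ≤ K R^{j/p} ‖N_j‖_p` in one variable, both for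
`N_j = |f_j|` in `x₁` and for the norm of `f_j` in `x₁` as a function of `x₂`.

Combined with the trivial bound `N_j ≤ R^{-j(1/p - 1/r)} sup_k R^{k(1/p - 1/r)} N_k`, such a bound
makes `N_j` decay geometrically away from the scale where the two cross, so for `p < r` the `ℓ^q`
sum costs only a constant at each point. If `p₂ < r₂` this is used in `x₂`, after Minkowski's
inequality and the single-function Nikol'skij inequality in `x₁`; if `p₂ = r₂`, then `p₁ < r₁` and
it is used in `x₁` for each fixed `x₂`.
-/

lemma ennreal_rpow_one_sub_mul_rpow (a : ℝ≥0∞) {s : ℝ} (hs₀ : 0 ≤ s) (hs₁ : s ≤ 1) :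
    a ^ (1 - s) * a ^ s = a := by
  rw [← ENNReal.rpow_add_of_nonneg _ _ (sub_nonneg.2 hs₁) hs₀, sub_add_cancel, ENNReal.rpow_one]

/-- The `ℓ^q` quasi-norm of a sequence of extended nonnegative reals. -/
noncomputable def ellNorm (q : ℝ) (a : ℕ → ℝ≥0∞) : ℝ≥0∞ :=
  (∑' j, a j ^ q) ^ (1 / q)

lemma ellNorm_eq_eLpNorm'_count (q : ℝ) (a : ℕ → ℝ≥0∞) :
    ellNorm q a = eLpNorm' a q Measure.count := by
  simp only [ellNorm, eLpNorm', enorm_eq_self, lintegral_count]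

lemma ellNorm_const_mul {q : ℝ} (hq : 0 < q) (c : ℝ≥0∞) (a : ℕ → ℝ≥0∞) :
    ellNorm q (fun j ↦ c * a j) = c * ellNorm q a := by
  simp only [ellNorm, ENNReal.mul_rpow_of_nonneg _ _ hq.le, ENNReal.tsum_mul_left]
  rw [ENNReal.mul_rpow_of_nonneg _ _ (by positivity), ← ENNReal.rpow_mul,
    mul_one_div_cancel hq.ne', ENNReal.rpow_one]

lemma ellNorm_mono {q : ℝ} (hq : 0 < q) {a b : ℕ → ℝ≥0∞} (h : ∀ j, a j ≤ b j) :
    ellNorm q a ≤ ellNorm q b := by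
  unfold ellNorm
  gcongr with j
  exact h j

lemma le_ellNorm {q : ℝ} (hq : 0 < q) (a : ℕ → ℝ≥0∞) (j : ℕ) : a j ≤ ellNorm q a := by
  rw [ellNorm, one_div, ENNReal.le_rpow_inv_iff hq]
  exact ENNReal.le_tsum j

section LpNorm

variable {α : Type*} {m : MeasurableSpace α} {μ : Measure α}

lemma eLpNorm'_mono_of_le {F G : α → ℝ≥0∞} {p : ℝ} (hp : 0 < p) (h : ∀ x, F x ≤ G x) :
    eLpNorm' F p μ ≤ eLpNorm' G p μ :=
  eLpNorm'_mono_enorm_ae hp.le (ae_of_all _ h)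

lemma eLpNorm'_const_mul {c : ℝ≥0∞} (hc : c ≠ ∞) (F : α → ℝ≥0∞) {p : ℝ} (hp : 0 < p) :
    eLpNorm' (fun x ↦ c * F x) p μ = c * eLpNorm' F p μ := by
  simp only [eLpNorm', enorm_eq_self, ENNReal.mul_rpow_of_nonneg _ _ hp.le]
  rw [lintegral_const_mul' _ _ (ENNReal.rpow_ne_top_of_nonneg hp.le hc),
    ENNReal.mul_rpow_of_nonneg _ _ (by positivity), ← ENNReal.rpow_mul,
    mul_one_div_cancel hp.ne', ENNReal.rpow_one]

lemma iSup_mul_eLpNorm'_le {ι : Type*} {c : ι → ℝ≥0∞} (hc : ∀ i, c i ≠ ∞) (F : ι → α → ℝ≥0∞)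
    {p : ℝ} (hp : 0 < p) :
    ⨆ i, c i * eLpNorm' (F i) p μ ≤ eLpNorm' (fun x ↦ ⨆ i, c i * F i x) p μ := by
  refine iSup_le fun i ↦ ?_
  rw [← eLpNorm'_const_mul (hc i) _ hp]
  exact eLpNorm'_mono_of_le hp fun x ↦ le_iSup (fun i ↦ c i * F i x) i

lemma eLpNorm'_comp_inv_mul (F : ℝ → ℝ≥0∞) {p B : ℝ} (hp : 0 < p) (hB : 0 < B) :
    eLpNorm' (fun t ↦ F (B⁻¹ * t)) p volume
      = ENNReal.ofReal B ^ (1 / p) * eLpNorm' F p volume := by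
  have map_dilation : Measure.map (B⁻¹ * ·) volume = ENNReal.ofReal B • volume := by
    rw [Real.map_volume_mul_left (inv_ne_zero hB.ne'), inv_inv, abs_of_pos hB]
  rw [← eLpNorm'_smul_measure hp.le, ← map_dilation, eLpNorm', eLpNorm',
    (measurableEmbedding_mulLeft₀ (inv_ne_zero hB.ne')).lintegral_map]

lemma eLpNorm'_le_mul_of_le_mul_rpow {F G : α → ℝ≥0∞} {p r : ℝ} {C c : ℝ≥0∞}
    (hp : 0 < p) (hpr : p ≤ r) (hG : AEMeasurable G μ)
    (h : ∀ x, F x ≤ C * (c * eLpNorm' G p μ) ^ (1 - p / r) * G x ^ (p / r)) :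
    eLpNorm' F r μ ≤ C * c ^ (1 - p / r) * eLpNorm' G p μ := by
  have hr : 0 < r := hp.trans_le hpr
  have hθ : p / r ≤ 1 := (div_le_one hr).2 hpr
  have norm_rpow : eLpNorm' (fun x ↦ G x ^ (p / r)) r μ = eLpNorm' G p μ ^ (p / r) := by
    simpa only [enorm_eq_self, mul_div_cancel₀ p hr.ne']
      using eLpNorm'_enorm_rpow G r (p / r) (div_pos hp hr)
  calc eLpNorm' F r μ
      ≤ C * (c * eLpNorm' G p μ) ^ (1 - p / r) * eLpNorm' (fun x ↦ G x ^ (p / r)) r μ :=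
        eLpNorm'_le_mul_eLpNorm'_of_ae_le_mul (hG.pow_const _).aestronglyMeasurable
          (ae_of_all _ h) hr
    _ = C * c ^ (1 - p / r) * (eLpNorm' G p μ ^ (1 - p / r) * eLpNorm' G p μ ^ (p / r)) := by
        rw [norm_rpow, ENNReal.mul_rpow_of_nonneg _ _ (sub_nonneg.2 hθ)]
        ring
    _ = C * c ^ (1 - p / r) * eLpNorm' G p μ := by
        rw [ennreal_rpow_one_sub_mul_rpow _ (by positivity) hθ]

lemma eLpNorm'_le_of_forall_le_mul_eLpNorm' {F : α → ℝ≥0∞} {p r : ℝ} {c : ℝ≥0∞}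
    (hp : 0 < p) (hpr : p ≤ r) (hF : AEMeasurable F μ) (h : ∀ x, F x ≤ c * eLpNorm' F p μ) :
    eLpNorm' F r μ ≤ c ^ (1 - p / r) * eLpNorm' F p μ := by
  have hr : 0 < r := hp.trans_le hpr
  have hθ : p / r ≤ 1 := (div_le_one hr).2 hpr
  rw [← one_mul (c ^ (1 - p / r))]
  refine eLpNorm'_le_mul_of_le_mul_rpow hp hpr hF fun x ↦ ?_
  calc F x = F x ^ (1 - p / r) * F x ^ (p / r) :=
        (ennreal_rpow_one_sub_mul_rpow _ (by positivity) hθ).symm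
    _ ≤ (c * eLpNorm' F p μ) ^ (1 - p / r) * F x ^ (p / r) := by
        gcongr
        exact h x
    _ = 1 * (c * eLpNorm' F p μ) ^ (1 - p / r) * F x ^ (p / r) := by rw [one_mul]

lemma ellNorm_anti {u q : ℝ} (hu : 0 < u) (huq : u ≤ q) (a : ℕ → ℝ≥0∞) :
    ellNorm q a ≤ ellNorm u a := by
  have h : ∀ j, a j ≤ 1 * eLpNorm' a u Measure.count := fun j ↦ by
    rw [one_mul, ← ellNorm_eq_eLpNorm'_count]
    exact le_ellNorm hu a j
  simpa only [ellNorm_eq_eLpNorm'_count, ENNReal.one_rpow, one_mul]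
    using eLpNorm'_le_of_forall_le_mul_eLpNorm' hu huq (measurable_of_countable a).aemeasurable h

lemma eLpNorm'_tsum_le {F : ℕ → α → ℝ≥0∞} {t : ℝ} (ht : 1 ≤ t) (hF : ∀ j, AEMeasurable (F j) μ) :
    eLpNorm' (fun x ↦ ∑' j, F j x) t μ ≤ ∑' j, eLpNorm' (F j) t μ := by
  have ht₀ : 0 < t := one_pos.trans_le ht
  have rpow_tsum (x : α) :
      (∑' j, F j x) ^ t = ⨆ n : ℕ, (∑ j ∈ Finset.range n, F j x) ^ t := by
    rw [ENNReal.tsum_eq_iSup_nat]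
    exact (ENNReal.orderIsoRpow t ht₀).map_iSup _
  simp only [eLpNorm', enorm_eq_self, rpow_tsum, one_div]
  rw [lintegral_iSup' (fun n ↦ by fun_prop)
    (ae_of_all _ fun x k n hkn ↦ by dsimp only; gcongr), ENNReal.rpow_inv_le_iff ht₀]
  refine iSup_le fun n ↦ ?_
  have h := (eLpNorm'_sum_le (s := Finset.range n)
    (fun j _ ↦ (hF j).aestronglyMeasurable) ht).trans (ENNReal.sum_le_tsum _)
  simpa only [eLpNorm', enorm_eq_self, Finset.sum_apply, one_div, ENNReal.rpow_inv_le_iff ht₀]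
    using h

lemma eLpNorm'_ellNorm_le_ellNorm_eLpNorm' {F : ℕ → α → ℝ≥0∞} {q r : ℝ} (hq : 0 < q) (hr : 0 < r)
    (hF : ∀ j, AEMeasurable (F j) μ) :
    eLpNorm' (fun x ↦ ellNorm q fun j ↦ F j x) r μ
      ≤ ellNorm (min q r) fun j ↦ eLpNorm' (F j) r μ := by
  set u := min q r
  have hu : 0 < u := lt_min hq hr
  have norm_rpow (G : α → ℝ≥0∞) {p s : ℝ} (hs : 0 < s) :
      eLpNorm' (fun x ↦ G x ^ s) p μ = eLpNorm' G (p * s) μ ^ s := by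
    simpa only [enorm_eq_self] using eLpNorm'_enorm_rpow G p s hs
  calc eLpNorm' (fun x ↦ ellNorm q fun j ↦ F j x) r μ
      ≤ eLpNorm' (fun x ↦ (∑' j, F j x ^ u) ^ (1 / u)) r μ :=
        eLpNorm'_mono_of_le hr fun x ↦ ellNorm_anti hu (min_le_left q r) _
    _ = eLpNorm' (fun x ↦ ∑' j, F j x ^ u) (r / u) μ ^ (1 / u) := by
        rw [norm_rpow _ (by positivity), mul_one_div]
    _ ≤ (∑' j, eLpNorm' (fun x ↦ F j x ^ u) (r / u) μ) ^ (1 / u) := by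
        gcongr
        exact eLpNorm'_tsum_le ((one_le_div hu).2 (min_le_right q r)) fun j ↦ (hF j).pow_const u
    _ = ellNorm u fun j ↦ eLpNorm' (F j) r μ := by
        simp only [norm_rpow _ hu, div_mul_cancel₀ r hu.ne', ellNorm]

lemma rpow_lintegral_mul_le {w h : α → ℝ≥0∞} {t : ℝ} (ht : 1 ≤ t) (hw : Measurable w)
    (hh : Measurable h) :
    (∫⁻ x, w x * h x ∂μ) ^ t ≤ (∫⁻ x, w x ∂μ) ^ (t - 1) * ∫⁻ x, w x * h x ^ t ∂μ := by
  have ht₀ : 0 < t := one_pos.trans_le ht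
  have holder := eLpNorm'_le_eLpNorm'_mul_rpow_measure_univ (μ := μ.withDensity w) one_pos ht
    hh.aestronglyMeasurable
  simp only [eLpNorm', enorm_eq_self, ENNReal.rpow_one, div_one,
    withDensity_apply _ MeasurableSet.univ, Measure.restrict_univ,
    lintegral_withDensity_eq_lintegral_mul _ hw hh,
    lintegral_withDensity_eq_lintegral_mul _ hw (hh.pow_const t), Pi.mul_apply] at holder
  calc (∫⁻ x, w x * h x ∂μ) ^ t
      ≤ ((∫⁻ x, w x * h x ^ t ∂μ) ^ (1 / t) * (∫⁻ x, w x ∂μ) ^ (1 - 1 / t)) ^ t := by gcongr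
    _ = (∫⁻ x, w x ∂μ) ^ (t - 1) * ∫⁻ x, w x * h x ^ t ∂μ := by
        rw [ENNReal.mul_rpow_of_nonneg _ _ ht₀.le, ← ENNReal.rpow_mul, ← ENNReal.rpow_mul,
          one_div_mul_cancel ht₀.ne', ENNReal.rpow_one, sub_mul, one_div_mul_cancel ht₀.ne',
          one_mul, mul_comm]

end LpNorm

section Geometric

variable {R : ℝ≥0∞}

lemma tsum_int_pow_natAbs_ne_top {ρ : ℝ≥0∞} (hρ : ρ < 1) : ∑' k : ℤ, ρ ^ k.natAbs ≠ ∞ := by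
  lift ρ to ℝ≥0 using hρ.ne_top
  have geometric : Summable fun n : ℕ ↦ (ρ : ℝ) ^ n :=
    summable_geometric_of_lt_one ρ.coe_nonneg (mod_cast hρ)
  have : Summable fun k : ℤ ↦ ρ ^ k.natAbs := by
    rw [← NNReal.summable_coe]
    exact .of_nat_of_neg (by simpa using geometric) (by simpa using geometric)
  simpa only [ENNReal.coe_pow] using ENNReal.tsum_coe_ne_top_iff_summable.2 this

lemma ellNorm_pow_natAbs_sub_le (ρ : ℝ≥0∞) {q : ℝ} (hq : 0 < q) (n : ℤ) :
    (ellNorm q fun j : ℕ ↦ ρ ^ (j - n : ℤ).natAbs) ≤ (∑' k : ℤ, (ρ ^ q) ^ k.natAbs) ^ (1 / q) := by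
  unfold ellNorm
  gcongr
  have shift_injective : Function.Injective fun j : ℕ ↦ (j - n : ℤ) := fun i j h ↦ by
    simpa using h
  have pow_rpow (k : ℕ) : (ρ ^ k) ^ q = (ρ ^ q) ^ k := by
    simp only [← ENNReal.rpow_natCast, ← ENNReal.rpow_mul, mul_comm]
  simpa only [pow_rpow] using
    ENNReal.tsum_comp_le_tsum_of_injective shift_injective fun k ↦ (ρ ^ q) ^ k.natAbs

lemma exists_eq_rpow_mul_and_eq_rpow_neg_mul {α β : ℝ} (hαβ : α + β ≠ 0) {X Y : ℝ≥0∞}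
    (hX : X ≠ 0) (hX' : X ≠ ∞) (hY : Y ≠ 0) (hY' : Y ≠ ∞) :
    ∃ T, T ≠ 0 ∧ T ≠ ∞ ∧ X = T ^ α * (X ^ (β / (α + β)) * Y ^ (α / (α + β))) ∧
      Y = T ^ (-β) * (X ^ (β / (α + β)) * Y ^ (α / (α + β))) := by
  have rpow_T (s : ℝ) :
      (X ^ (1 / (α + β)) * Y ^ (-(1 / (α + β)))) ^ s
        = X ^ (s / (α + β)) * Y ^ (-(s / (α + β))) := by
    rw [ENNReal.mul_rpow_of_ne_zero (by simp [hX, hX']) (by simp [hY, hY']),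
      ← ENNReal.rpow_mul, ← ENNReal.rpow_mul]
    ring_nf
  refine ⟨X ^ (1 / (α + β)) * Y ^ (-(1 / (α + β))), ?_, ?_, ?_, ?_⟩
  · simp [hX, hX', hY, hY']
  · finiteness
  · rw [rpow_T, mul_mul_mul_comm, ← ENNReal.rpow_add _ _ hX hX', ← ENNReal.rpow_add _ _ hY hY',
      ← add_div, div_self hαβ, neg_add_cancel, ENNReal.rpow_one, ENNReal.rpow_zero, mul_one]
  · rw [rpow_T, mul_mul_mul_comm, ← ENNReal.rpow_add _ _ hX hX', ← ENNReal.rpow_add _ _ hY hY',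
      neg_div, neg_neg, ← add_div, add_comm β, div_self hαβ, neg_add_cancel,
      ENNReal.rpow_one, ENNReal.rpow_zero, one_mul]

lemma exists_int_forall_min_rpow_le (hR : 1 < R) (hR' : R ≠ ∞) {α β : ℝ} (hα : 0 < α)
    (hβ : 0 < β) {T : ℝ≥0∞} (hT : T ≠ 0) (hT' : T ≠ ∞) :
    ∃ n : ℤ, ∀ j : ℕ, min (R ^ (-(j * α)) * T ^ α) (R ^ (j * β) * T ^ (-β))
      ≤ R ^ α * (R ^ (-min α β)) ^ (j - n : ℤ).natAbs := by
  have hR₀ : R ≠ 0 := (one_pos.trans hR).ne'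
  obtain ⟨n, hn, hn'⟩ := ENNReal.exists_mem_Ico_zpow hT hT' hR hR'
  refine ⟨n, fun j ↦ ?_⟩
  rw [← ENNReal.rpow_natCast, ← ENNReal.rpow_mul, ← ENNReal.rpow_add _ _ hR₀ hR', Nat.cast_natAbs,
    Int.cast_abs]
  rw [← ENNReal.rpow_intCast] at hn hn'
  push_cast at hn' ⊢
  rcases le_total (n : ℝ) j with hnj | hjn
  · calc min (R ^ (-(j * α)) * T ^ α) (R ^ (j * β) * T ^ (-β))
        ≤ R ^ (-(j * α)) * (R ^ (n + 1 : ℝ)) ^ α := (min_le_left _ _).trans (by gcongr)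
      _ = R ^ (α + -α * (j - n)) := by
          rw [← ENNReal.rpow_mul, ← ENNReal.rpow_add _ _ hR₀ hR']
          ring_nf
      _ ≤ R ^ (α + -min α β * |(j : ℝ) - n|) := by
          rw [abs_of_nonneg (sub_nonneg.2 hnj)]
          gcongr
          exacts [hR.le, min_le_left α β]
  · calc min (R ^ (-(j * α)) * T ^ α) (R ^ (j * β) * T ^ (-β))
        ≤ R ^ (j * β) * (R ^ (n : ℝ)) ^ (-β) := (min_le_right _ _).trans (by
          simp only [ENNReal.rpow_neg]
          gcongr)
      _ = R ^ (-β * (n - j)) := by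
          rw [← ENNReal.rpow_mul, ← ENNReal.rpow_add _ _ hR₀ hR']
          ring_nf
      _ ≤ R ^ (α + -min α β * |(j : ℝ) - n|) := by
          rw [abs_of_nonpos (sub_nonpos.2 hjn), neg_sub]
          gcongr
          · exact hR.le
          · nlinarith [min_le_right α β, sub_nonneg.2 hjn]

lemma ellNorm_le_of_geometric_bounds (hR : 1 < R) (hR' : R ≠ ∞) {α β q : ℝ} (hα : 0 < α)
    (hβ : 0 < β) (hq : 0 < q) {a : ℕ → ℝ≥0∞} {X Y : ℝ≥0∞} (hX₀ : X ≠ 0) (hX' : X ≠ ∞)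
    (hY₀ : Y ≠ 0) (hY' : Y ≠ ∞) (hX : ∀ j : ℕ, a j ≤ R ^ (-(j * α)) * X)
    (hY : ∀ j : ℕ, a j ≤ R ^ (j * β) * Y) :
    ellNorm q a ≤ R ^ α * (∑' k : ℤ, ((R ^ (-min α β)) ^ q) ^ k.natAbs) ^ (1 / q)
      * (X ^ (β / (α + β)) * Y ^ (α / (α + β))) := by
  obtain ⟨T, hT, hT', eqX, eqY⟩ :=
    exists_eq_rpow_mul_and_eq_rpow_neg_mul (add_pos hα hβ).ne' hX₀ hX' hY₀ hY'
  set M := X ^ (β / (α + β)) * Y ^ (α / (α + β))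
  set ρ := R ^ (-min α β)
  obtain ⟨n, hn⟩ := exists_int_forall_min_rpow_le hR hR' hα hβ hT hT'
  have le_pow (j : ℕ) : a j ≤ R ^ α * M * ρ ^ (j - n : ℤ).natAbs :=
    calc a j ≤ min (R ^ (-(j * α)) * T ^ α) (R ^ (j * β) * T ^ (-β)) * M := by
          rw [min_mul, mul_assoc, mul_assoc, ← eqX, ← eqY]
          exact le_min (hX j) (hY j)
      _ ≤ R ^ α * ρ ^ (j - n : ℤ).natAbs * M := by gcongr; exact hn j
      _ = R ^ α * M * ρ ^ (j - n : ℤ).natAbs := by ring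
  calc ellNorm q a ≤ R ^ α * M * ellNorm q fun j : ℕ ↦ ρ ^ (j - n : ℤ).natAbs :=
        (ellNorm_mono hq le_pow).trans_eq (ellNorm_const_mul hq _ _)
    _ ≤ R ^ α * M * (∑' k : ℤ, (ρ ^ q) ^ k.natAbs) ^ (1 / q) := by
        gcongr
        exact ellNorm_pow_natAbs_sub_le ρ hq n
    _ = R ^ α * (∑' k : ℤ, (ρ ^ q) ^ k.natAbs) ^ (1 / q) * M := by ring

lemma exists_ellNorm_le_of_geometric_bounds (hR : 1 < R) (hR' : R ≠ ∞) {α β q : ℝ}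
    (hα : 0 < α) (hβ : 0 < β) (hq : 0 < q) :
    ∃ C ≠ ∞, ∀ (a : ℕ → ℝ≥0∞) (X Y : ℝ≥0∞),
      (∀ j : ℕ, a j ≤ R ^ (-(j * α)) * X) → (∀ j : ℕ, a j ≤ R ^ (j * β) * Y) →
      ellNorm q a ≤ C * (X ^ (β / (α + β)) * Y ^ (α / (α + β))) := by
  have hρ : R ^ (-min α β) < 1 :=
    ENNReal.rpow_lt_one_of_one_lt_of_neg hR (neg_neg_of_pos (lt_min hα hβ))
  set S := ∑' k : ℤ, ((R ^ (-min α β)) ^ q) ^ k.natAbs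
  have hS : S ≠ ∞ := tsum_int_pow_natAbs_ne_top (ENNReal.rpow_lt_one hρ hq)
  have hS₀ : S ≠ 0 := fun h ↦ by simpa using ENNReal.tsum_eq_zero.1 h 0
  set C := R ^ α * S ^ (1 / q)
  have hC₀ : C ≠ 0 := by simp [C, (one_pos.trans hR).ne', hR', hS₀, hS]
  have hα' : 0 < α / (α + β) := by positivity
  have hβ' : 0 < β / (α + β) := by positivity
  refine ⟨C, by finiteness, fun a X Y hX hY ↦ ?_⟩
  have ellNorm_zero (ha : ∀ j, a j = 0) : ellNorm q a = 0 := by simp [ellNorm, ha, hq]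
  rcases eq_or_ne X 0 with rfl | hX₀
  · simp [ellNorm_zero fun j ↦ by simpa using hX j]
  rcases eq_or_ne Y 0 with rfl | hY₀
  · simp [ellNorm_zero fun j ↦ by simpa using hY j]
  rcases eq_or_ne X ∞ with rfl | hX'
  · simp [ENNReal.top_rpow_of_pos hβ', ENNReal.top_mul, ENNReal.mul_top hC₀, hY₀, hα'.le]
  rcases eq_or_ne Y ∞ with rfl | hY'
  · simp [ENNReal.top_rpow_of_pos hα', ENNReal.mul_top, ENNReal.mul_top hC₀, hX₀, hβ'.le]
  exact ellNorm_le_of_geometric_bounds hR hR' hα hβ hq hX₀ hX' hY₀ hY' hX hY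

/-- At each point the two bounds on `N j` are balanced at the scale where they cross, and decay
geometrically away from it, so that the sum over `j` costs only a constant. -/
lemma exists_eLpNorm'_ellNorm_le_mul_eLpNorm'_iSup {p r q : ℝ} (hp : 0 < p) (hpr : p < r)
    (hq : 0 < q) (hR : 1 < R) (hR' : R ≠ ∞) {K : ℝ≥0∞} (hK : K ≠ ∞)
    {α : Type*} {m : MeasurableSpace α} (μ : Measure α) :
    ∃ C ≠ ∞, ∀ N : ℕ → α → ℝ≥0∞, (∀ j, Measurable (N j)) →
      (∀ j : ℕ, ∀ x, N j x ≤ K * R ^ (j / p) * eLpNorm' (N j) p μ) →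
      eLpNorm' (fun x ↦ ellNorm q fun j ↦ N j x) r μ
        ≤ C * eLpNorm' (fun x ↦ ⨆ j : ℕ, R ^ (j * (1 / p - 1 / r)) * N j x) p μ := by
  have hr : 0 < r := hp.trans hpr
  have hR₀ : R ≠ 0 := (one_pos.trans hR).ne'
  have hδ : 0 < 1 / p - 1 / r := sub_pos.2 (one_div_lt_one_div_of_lt hp hpr)
  have exponent₁ : 1 / r / (1 / p - 1 / r + 1 / r) = p / r := by
    rw [sub_add_cancel]; field_simp
  have exponent₂ : (1 / p - 1 / r) / (1 / p - 1 / r + 1 / r) = 1 - p / r := by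
    rw [sub_add_cancel]; field_simp
  obtain ⟨C, hC, interpolate⟩ :=
    exists_ellNorm_le_of_geometric_bounds hR hR' hδ (one_div_pos.2 hr) hq
  rw [exponent₁, exponent₂] at interpolate
  have hθ : 0 ≤ 1 - p / r := sub_nonneg.2 ((div_le_one hr).2 hpr.le)
  refine ⟨C * K ^ (1 - p / r), by finiteness, fun N hN bound ↦ ?_⟩
  set G : α → ℝ≥0∞ := fun x ↦ ⨆ j : ℕ, R ^ (j * (1 / p - 1 / r)) * N j x
  have hG : Measurable G := .iSup fun j ↦ (hN j).const_mul _
  have le_G (j : ℕ) (x : α) : N j x ≤ R ^ (-(j * (1 / p - 1 / r))) * G x := by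
    rw [ENNReal.rpow_neg, ← ENNReal.div_eq_inv_mul, ENNReal.le_div_iff_mul_le
      (by simp [hR₀, hR']) (by simp [hR₀, hR']), mul_comm]
    exact le_iSup (fun j : ℕ ↦ R ^ (j * (1 / p - 1 / r)) * N j x) j
  have le_norm_G (j : ℕ) (x : α) : N j x ≤ R ^ (j * (1 / r)) * (K * eLpNorm' G p μ) :=
    calc N j x ≤ K * R ^ (j / p) * (R ^ (-(j * (1 / p - 1 / r))) * eLpNorm' G p μ) := by
          refine (bound j x).trans ?_
          gcongr
          exact eLpNorm'_le_mul_eLpNorm'_of_ae_le_mul hG.aestronglyMeasurable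
            (ae_of_all _ (le_G j)) hp
      _ = R ^ (j / p + -(j * (1 / p - 1 / r))) * (K * eLpNorm' G p μ) := by
          rw [ENNReal.rpow_add _ _ hR₀ hR']
          ring
      _ = R ^ (j * (1 / r)) * (K * eLpNorm' G p μ) := by ring_nf
  refine eLpNorm'_le_mul_of_le_mul_rpow hp hpr.le hG.aemeasurable fun x ↦ ?_
  rw [mul_assoc, mul_comm (_ ^ (1 - p / r))]
  exact interpolate _ _ _ (fun j ↦ le_G j x) fun j ↦ le_norm_G j x

end Geometric

section SelfImprovement

lemma rpow_le_of_le_rpow_one_sub_mul {M K : ℝ≥0∞} {s : ℝ} (hs₀ : 0 < s) (hs₁ : s ≤ 1)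
    (hM : M ≠ ∞) (h : M ≤ M ^ (1 - s) * K) : M ^ s ≤ K := by
  rcases eq_or_ne M 0 with rfl | hM₀
  · simp [hs₀]
  refine (ENNReal.mul_le_mul_iff_right ?_ ?_).1
    ((ennreal_rpow_one_sub_mul_rpow M hs₀.le hs₁).trans_le h)
  all_goals simp [hM₀, hM]

/-- Submultiplicativity of `k` bounds `M = ⨆ z, k x z * H z` by `M ^ (1 - s)` times the right-hand
side, and `M ^ (1 - s)` can be divided out because `M` is finite. -/
lemma rpow_le_lintegral_of_le_lintegral {α : Type*} {m : MeasurableSpace α} {μ : Measure α}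
    {k : α → α → ℝ≥0∞} (k_diag : ∀ x, k x x = 1) (k_le_one : ∀ x z, k x z ≤ 1)
    (k_mul_le : ∀ x z w, k x z * k z w ≤ k x w) {H : α → ℝ≥0∞} {D L : ℝ≥0∞} (hD : D ≠ ∞)
    (H_le : ∀ x, H x ≤ D) (hH : ∀ x, H x ≤ L * ∫⁻ w, k x w * H w ∂μ) {s : ℝ} (hs₀ : 0 < s)
    (hs₁ : s ≤ 1) (x : α) :
    H x ^ s ≤ L * ∫⁻ w, (k x w * H w) ^ s ∂μ := by
  set M := ⨆ z, k x z * H z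
  have le_M (z : α) : k x z * H z ≤ M := le_iSup (fun z ↦ k x z * H z) z
  have hM : M ≠ ∞ := ne_top_of_le_ne_top hD <| iSup_le fun z ↦
    (mul_le_of_le_one_left' (k_le_one x z)).trans (H_le z)
  have H_le_M : H x ≤ M := by simpa [k_diag] using le_M x
  refine (ENNReal.rpow_le_rpow H_le_M hs₀.le).trans
    (rpow_le_of_le_rpow_one_sub_mul hs₀ hs₁ hM (iSup_le fun z ↦ ?_))
  calc k x z * H z ≤ k x z * (L * ∫⁻ w, k z w * H w ∂μ) := by gcongr; exact hH z
    _ = L * ∫⁻ w, k x z * k z w * H w ∂μ := by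
        simp only [mul_assoc]
        rw [lintegral_const_mul' _ _ (ne_top_of_le_ne_top ENNReal.one_ne_top (k_le_one x z)),
          mul_left_comm]
    _ ≤ L * ∫⁻ w, M ^ (1 - s) * (k x w * H w) ^ s ∂μ := by
        refine mul_le_mul' le_rfl (lintegral_mono fun w ↦ ?_)
        calc k x z * k z w * H w ≤ k x w * H w := by gcongr; exact k_mul_le x z w
          _ = (k x w * H w) ^ (1 - s) * (k x w * H w) ^ s :=
            (ennreal_rpow_one_sub_mul_rpow _ hs₀.le hs₁).symm
          _ ≤ M ^ (1 - s) * (k x w * H w) ^ s := by gcongr; exact le_M w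
    _ = M ^ (1 - s) * (L * ∫⁻ w, (k x w * H w) ^ s ∂μ) := by
        rw [lintegral_const_mul' _ _ (ENNReal.rpow_ne_top_of_nonneg (sub_nonneg.2 hs₁) hM),
          mul_left_comm]

/-- Peetre's weight `(1 + |t|)⁻¹`, whose powers measure the decay of convolution kernels. -/
noncomputable def peetreWeight (t : ℝ) : ℝ≥0∞ := ENNReal.ofReal (1 + |t|)⁻¹

lemma peetreWeight_norm (t : ℝ) : peetreWeight ‖t‖ = peetreWeight t := by
  rw [peetreWeight, Real.norm_eq_abs, abs_abs, peetreWeight]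

lemma peetreWeight_le_one (t : ℝ) : peetreWeight t ≤ 1 :=
  ENNReal.ofReal_le_one.2 (inv_le_one_of_one_le₀ (le_add_of_nonneg_right (abs_nonneg t)))

lemma peetreWeight_mul_le (x z w : ℝ) :
    peetreWeight (x - z) * peetreWeight (z - w) ≤ peetreWeight (x - w) := by
  rw [peetreWeight, peetreWeight, peetreWeight, ← ENNReal.ofReal_mul (by positivity), ← mul_inv]
  gcongr
  nlinarith [abs_sub_le x z w, mul_nonneg (abs_nonneg (x - z)) (abs_nonneg (z - w))]

lemma peetreWeight_anti {s t : ℝ} (h : |s| ≤ |t|) : peetreWeight t ≤ peetreWeight s := by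
  unfold peetreWeight
  gcongr

@[fun_prop]
lemma measurable_peetreWeight : Measurable peetreWeight := by
  unfold peetreWeight
  fun_prop

lemma lintegral_peetreWeight_sq_ne_top : ∫⁻ t, peetreWeight t ^ 2 ≠ ∞ := by
  have h := finite_integral_one_add_norm (E := ℝ) (μ := volume) (r := 2) (by simp)
  refine ne_of_eq_of_ne (lintegral_congr fun t ↦ ?_) h.ne
  rw [peetreWeight, ← ENNReal.ofReal_pow (by positivity), Real.rpow_neg (by positivity),
    Real.norm_eq_abs, Real.rpow_two, inv_pow]

/-- A bounded function on the line dominated by its averages against every power of Peetre's weight.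
Moduli of band-limited functions are of this type, with `κ` depending only on the band. -/
structure SubReproducing (κ : ℕ → ℝ≥0) (H : ℝ → ℝ≥0∞) : Prop where
  measurable : Measurable H
  exists_le : ∃ D : ℝ≥0, ∀ x, H x ≤ D
  le_lintegral (n : ℕ) (x : ℝ) : H x ≤ κ n * ∫⁻ w, peetreWeight (x - w) ^ n * H w

namespace SubReproducing

variable {κ : ℕ → ℝ≥0} {H : ℝ → ℝ≥0∞} {p : ℝ}

lemma rpow_le_of_le_one (hH : SubReproducing κ H) (hp : 0 < p) (hp₁ : p ≤ 1) (n : ℕ) (x : ℝ) :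
    H x ^ p ≤ κ ⌈n / p⌉₊ * ∫⁻ w, peetreWeight (x - w) ^ n * H w ^ p := by
  obtain ⟨D, hD⟩ := hH.exists_le
  set l := ⌈n / p⌉₊
  have hl : (n : ℝ) ≤ l * p := (div_le_iff₀ hp).1 (Nat.le_ceil _)
  calc H x ^ p ≤ κ l * ∫⁻ w, (peetreWeight (x - w) ^ l * H w) ^ p :=
        rpow_le_lintegral_of_le_lintegral (k := fun x w ↦ peetreWeight (x - w) ^ l)
          (by simp [peetreWeight]) (fun x z ↦ pow_le_one₀ zero_le (peetreWeight_le_one _))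
          (fun x z w ↦ by rw [← mul_pow]; gcongr; exact peetreWeight_mul_le x z w)
          ENNReal.coe_ne_top hD (hH.le_lintegral l) hp hp₁ x
    _ ≤ κ l * ∫⁻ w, peetreWeight (x - w) ^ n * H w ^ p := by
        gcongr with w
        rw [ENNReal.mul_rpow_of_nonneg _ _ hp.le, ← ENNReal.rpow_natCast, ← ENNReal.rpow_mul,
          ← ENNReal.rpow_natCast]
        gcongr ?_ * _
        exact ENNReal.rpow_le_rpow_of_exponent_ge (peetreWeight_le_one _) hl

lemma rpow_le_of_one_le (hH : SubReproducing κ H) (hp : 1 ≤ p) (n : ℕ) (x : ℝ) :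
    H x ^ p ≤ κ (n + 2) ^ p * (∫⁻ t, peetreWeight t ^ 2) ^ (p - 1)
      * ∫⁻ w, peetreWeight (x - w) ^ n * H w ^ p := by
  have hp₀ : 0 < p := one_pos.trans_le hp
  have weight_le {i j : ℕ} (hij : i ≤ j) (t : ℝ) : peetreWeight t ^ j ≤ peetreWeight t ^ i :=
    pow_le_pow_of_le_one zero_le (peetreWeight_le_one t) hij
  calc H x ^ p ≤ (κ (n + 2) * ∫⁻ w, peetreWeight (x - w) ^ (n + 2) * H w) ^ p := by
        gcongr
        exact hH.le_lintegral _ x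
    _ ≤ κ (n + 2) ^ p * ((∫⁻ w, peetreWeight (x - w) ^ (n + 2)) ^ (p - 1)
          * ∫⁻ w, peetreWeight (x - w) ^ (n + 2) * H w ^ p) := by
        rw [ENNReal.mul_rpow_of_nonneg _ _ hp₀.le]
        gcongr
        exact rpow_lintegral_mul_le hp (by fun_prop) hH.measurable
    _ ≤ κ (n + 2) ^ p * ((∫⁻ w, peetreWeight (x - w) ^ 2) ^ (p - 1)
          * ∫⁻ w, peetreWeight (x - w) ^ n * H w ^ p) := by
        gcongr _ * (lintegral _ (fun w ↦ ?_) ^ _ * lintegral _ fun w ↦ ?_ * _)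
        exacts [weight_le (Nat.le_add_left 2 n) _, weight_le (Nat.le_add_right n 2) _]
    _ = _ := by
        rw [lintegral_sub_left_eq_self (fun t ↦ peetreWeight t ^ 2) x, mul_assoc]

lemma exists_rpow (κ : ℕ → ℝ≥0) (hp : 0 < p) :
    ∃ κ' : ℕ → ℝ≥0, ∀ H, SubReproducing κ H → SubReproducing κ' fun x ↦ H x ^ p := by
  obtain ⟨κ', hκ'⟩ : ∃ κ' : ℕ → ℝ≥0, ∀ H, SubReproducing κ H → ∀ (n : ℕ) (x : ℝ),
      H x ^ p ≤ κ' n * ∫⁻ w, peetreWeight (x - w) ^ n * H w ^ p := by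
    rcases le_total p 1 with hp₁ | hp₁
    · exact ⟨fun n ↦ κ ⌈n / p⌉₊, fun H hH ↦ hH.rpow_le_of_le_one hp hp₁⟩
    · refine ⟨fun n ↦ κ (n + 2) ^ p * (∫⁻ t, peetreWeight t ^ 2).toNNReal ^ (p - 1),
        fun H hH n x ↦ (hH.rpow_le_of_one_le hp₁ n x).trans_eq ?_⟩
      rw [ENNReal.coe_mul, ENNReal.coe_rpow_of_nonneg _ hp.le,
        ENNReal.coe_rpow_of_nonneg _ (sub_nonneg.2 hp₁),
        ENNReal.coe_toNNReal lintegral_peetreWeight_sq_ne_top]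
  refine ⟨κ', fun H hH ↦ ⟨hH.measurable.pow_const p, ?_, hκ' H hH⟩⟩
  obtain ⟨D, hD⟩ := hH.exists_le
  refine ⟨D ^ p, fun x ↦ ?_⟩
  rw [ENNReal.coe_rpow_of_nonneg _ hp.le]
  gcongr
  exact hD x

lemma exists_le_mul_eLpNorm' (κ : ℕ → ℝ≥0) (hp : 0 < p) :
    ∃ K : ℝ≥0, ∀ H, SubReproducing κ H → ∀ x, H x ≤ K * eLpNorm' H p volume := by
  obtain ⟨κ', hκ'⟩ := exists_rpow κ hp
  refine ⟨κ' 0 ^ (1 / p), fun H hH x ↦ ?_⟩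
  have h := (hκ' H hH).le_lintegral 0 x
  simp only [pow_zero, one_mul] at h
  rw [ENNReal.coe_rpow_of_nonneg _ (by positivity), eLpNorm',
    ← ENNReal.mul_rpow_of_nonneg _ _ (by positivity), one_div, ENNReal.le_rpow_inv_iff hp]
  exact h

lemma exists_le_mul_eLpNorm'_of_dilation (κ : ℕ → ℝ≥0) (hp : 0 < p) :
    ∃ K : ℝ≥0, ∀ (B : ℝ) (H : ℝ → ℝ≥0∞), 0 < B → SubReproducing κ (fun t ↦ H (B⁻¹ * t)) →
      ∀ x, H x ≤ K * ENNReal.ofReal B ^ (1 / p) * eLpNorm' H p volume := by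
  obtain ⟨K, hK⟩ := exists_le_mul_eLpNorm' κ hp
  refine ⟨K, fun B H hB hH x ↦ ?_⟩
  rw [mul_assoc, ← eLpNorm'_comp_inv_mul H hp hB]
  simpa only [inv_mul_cancel_left₀ hB.ne'] using hK _ hH (B * x)

lemma lintegral {β : Type*} {m : MeasurableSpace β} {ν : Measure β} [SFinite ν]
    {F : ℝ → β → ℝ≥0∞} (hF : Measurable (Function.uncurry F))
    (h : ∀ b, SubReproducing κ fun x ↦ F x b) (h_le : ∃ D : ℝ≥0, ∀ x, ∫⁻ b, F x b ∂ν ≤ D) :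
    SubReproducing κ fun x ↦ ∫⁻ b, F x b ∂ν where
  measurable := hF.lintegral_prod_right'
  exists_le := h_le
  le_lintegral n x := by
    calc ∫⁻ b, F x b ∂ν
        ≤ ∫⁻ b, κ n * (∫⁻ w, peetreWeight (x - w) ^ n * F w b) ∂ν :=
          lintegral_mono fun b ↦ (h b).le_lintegral n x
      _ = κ n * ∫⁻ w, ∫⁻ b, peetreWeight (x - w) ^ n * F w b ∂ν := by
          rw [lintegral_const_mul' _ _ ENNReal.coe_ne_top, lintegral_lintegral_swap]
          fun_prop
      _ = κ n * ∫⁻ w, peetreWeight (x - w) ^ n * ∫⁻ b, F w b ∂ν := by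
          congr! 3 with w
          exact lintegral_const_mul _ (hF.comp measurable_prodMk_left)

end SubReproducing

end SelfImprovement

section Fourier

lemma exists_schwartzMap_fourier_eq_one :
    ∃ φ : 𝓢(ℝ, ℂ), ∀ η : ℝ, |η| ≤ 1 → 𝓕 (φ : ℝ → ℂ) η = 1 := by
  let b : ContDiffBump (0 : ℝ) := ⟨1, 2, one_pos, one_lt_two⟩
  have compact_support : HasCompactSupport fun x ↦ (b x : ℂ) :=
    b.hasCompactSupport.comp_left (g := fun x : ℝ ↦ (x : ℂ)) Complex.ofReal_zero
  let ψ : 𝓢(ℝ, ℂ) := compact_support.toSchwartzMap (Complex.ofRealCLM.contDiff.comp b.contDiff)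
  refine ⟨𝓕⁻ ψ, fun η hη ↦ ?_⟩
  have hb : b η = 1 := b.one_of_mem_closedBall (by simpa [b] using hη)
  rw [← SchwartzMap.fourier_coe, FourierTransform.fourier_fourierInv_eq]
  exact (congrArg Complex.ofReal hb).trans Complex.ofReal_one

lemma exists_enorm_le_mul_peetreWeight_norm_pow {F E : Type*} [NormedAddCommGroup F]
    [NormedSpace ℝ F] [NormedAddCommGroup E] [NormedSpace ℝ E] (f : 𝓢(F, E)) (n : ℕ) :
    ∃ C : ℝ≥0, ∀ x, ‖f x‖ₑ ≤ C * peetreWeight ‖x‖ ^ n := by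
  set C := 2 ^ n * ((Finset.Iic (n, 0)).sup fun m ↦ SchwartzMap.seminorm ℝ m.1 m.2) f
  have hC : 0 ≤ C := by positivity
  refine ⟨C.toNNReal, fun x ↦ ?_⟩
  have decay : (1 + ‖x‖) ^ n * ‖iteratedFDeriv ℝ 0 f x‖ ≤ C :=
    SchwartzMap.one_add_le_sup_seminorm_apply (m := (n, 0)) le_rfl le_rfl f x
  rw [norm_iteratedFDeriv_zero] at decay
  rw [← ofReal_norm, ← ENNReal.ofReal, peetreWeight, abs_norm,
    ← ENNReal.ofReal_pow (by positivity), ← ENNReal.ofReal_mul hC, inv_pow, ← div_eq_mul_inv]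
  gcongr
  rwa [le_div_iff₀' (by positivity)]

variable {V E : Type*} [NormedAddCommGroup V] [InnerProductSpace ℝ V] [FiniteDimensional ℝ V]
  [MeasurableSpace V] [BorelSpace V] [NormedAddCommGroup E] [NormedSpace ℂ E] [CompleteSpace E]

lemma eq_integral_fourierChar_smul_fourier (f : 𝓢(V, E)) (x : V) :
    f x = ∫ ξ, 𝐞 (inner ℝ ξ x) • 𝓕 (f : V → E) ξ := by
  rw [← Real.fourierInv_eq, ← SchwartzMap.fourier_coe, ← SchwartzMap.fourierInv_coe,
    FourierTransform.fourierInv_fourier_eq]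

lemma eq_integral_smul_translate {φ : 𝓢(ℝ, ℂ)} (hφ : ∀ η : ℝ, |η| ≤ 1 → 𝓕 (φ : ℝ → ℂ) η = 1)
    (f : 𝓢(V, E)) {e : V} (hf : ∀ ξ, 𝓕 (f : V → E) ξ ≠ 0 → |inner ℝ ξ e| ≤ 1) (x : V) :
    f x = ∫ t : ℝ, φ t • f (x - t • e) := by
  have split_phase (t : ℝ) (ξ : V) : φ t • 𝐞 (inner ℝ ξ (x - t • e)) • 𝓕 (f : V → E) ξ
      = (𝐞 (-(t * inner ℝ ξ e)) • φ t) • 𝐞 (inner ℝ ξ x) • 𝓕 (f : V → E) ξ := by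
    rw [inner_sub_right, inner_smul_right, sub_eq_neg_add, AddChar.map_add_eq_mul, mul_smul]
    simp only [Circle.smul_def, smul_smul, smul_eq_mul]
    ring_nf
  have integrable_prod : Integrable (Function.uncurry fun (t : ℝ) (ξ : V) ↦
      φ t • 𝐞 (inner ℝ ξ (x - t • e)) • 𝓕 (f : V → E) ξ) (volume.prod volume) := by
    rw [← SchwartzMap.fourier_coe]
    refine (φ.integrable.smul_prod (𝓕 f).integrable).mono ?_ (ae_of_all _ fun z ↦ ?_)
    · have := φ.continuous
      have := (𝓕 f).continuous
      refine Continuous.aestronglyMeasurable ?_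
      simp only [Function.uncurry_def, Circle.smul_def]
      fun_prop
    · simp [Function.uncurry_def, norm_smul]
  calc f x = ∫ ξ, 𝐞 (inner ℝ ξ x) • 𝓕 (f : V → E) ξ := eq_integral_fourierChar_smul_fourier f x
    _ = ∫ ξ, 𝓕 (φ : ℝ → ℂ) (inner ℝ ξ e) • 𝐞 (inner ℝ ξ x) • 𝓕 (f : V → E) ξ := by
        congr 1 with ξ
        by_cases hξ : 𝓕 (f : V → E) ξ = 0
        · simp [hξ]
        · rw [hφ _ (hf ξ hξ), one_smul]
    _ = ∫ ξ, ∫ t, φ t • 𝐞 (inner ℝ ξ (x - t • e)) • 𝓕 (f : V → E) ξ := by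
        simp only [split_phase, integral_smul_const, Real.fourier_real_eq]
    _ = ∫ t, φ t • f (x - t • e) := by
        rw [← integral_integral_swap integrable_prod]
        simp only [integral_smul, eq_integral_fourierChar_smul_fourier f (x - _)]

lemma exists_subReproducing_enorm_line :
    ∃ κ : ℕ → ℝ≥0, ∀ (f : 𝓢(V, E)) (e : V),
      (∀ ξ, 𝓕 (f : V → E) ξ ≠ 0 → |inner ℝ ξ e| ≤ 1) →
      ∀ x₀, SubReproducing κ fun t ↦ ‖f (x₀ + t • e)‖ₑ := by
  obtain ⟨φ, hφ⟩ := exists_schwartzMap_fourier_eq_one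
  choose κ hκ using exists_enorm_le_mul_peetreWeight_norm_pow φ
  refine ⟨κ, fun f e hf x₀ ↦ ⟨?_, ?_, fun n x ↦ ?_⟩⟩
  · exact (f.continuous.comp (by fun_prop)).enorm.measurable
  · obtain ⟨D, hD⟩ := exists_enorm_le_mul_peetreWeight_norm_pow f 0
    exact ⟨D, fun t ↦ by simpa using hD (x₀ + t • e)⟩
  · calc ‖f (x₀ + x • e)‖ₑ = ‖∫ t, φ t • f (x₀ + x • e - t • e)‖ₑ := by
          rw [← eq_integral_smul_translate hφ f hf]
      _ ≤ ∫⁻ t, ‖φ t‖ₑ * ‖f (x₀ + x • e - t • e)‖ₑ :=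
          (enorm_integral_le_lintegral_enorm _).trans_eq (by simp only [enorm_smul])
      _ ≤ ∫⁻ t, κ n * (peetreWeight t ^ n * ‖f (x₀ + x • e - t • e)‖ₑ) := by
          refine lintegral_mono fun t ↦ ?_
          rw [← mul_assoc, ← peetreWeight_norm t]
          gcongr
          exact hκ n t
      _ = κ n * ∫⁻ w, peetreWeight (x - w) ^ n * ‖f (x₀ + w • e)‖ₑ := by
          rw [lintegral_const_mul' _ _ ENNReal.coe_ne_top, ← lintegral_sub_left_eq_self _ x]
          simp only [sub_smul, add_sub_assoc, sub_sub_cancel]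

end Fourier

section Plane

variable {E : Type*} [NormedAddCommGroup E] [NormedSpace ℝ E]

lemma pt_eq_add_smul_single_zero (x y : ℝ) :
    pt x y = pt 0 y + x • EuclideanSpace.single 0 (1 : ℝ) := by
  ext i
  fin_cases i <;> simp [pt]

lemma pt_eq_add_smul_single_one (x y : ℝ) :
    pt x y = pt x 0 + y • EuclideanSpace.single 1 (1 : ℝ) := by
  ext i
  fin_cases i <;> simp [pt]

lemma abs_fst_le_norm_pt (x y : ℝ) : |x| ≤ ‖pt x y‖ := by
  simpa [pt] using PiLp.norm_apply_le (pt x y) 0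

lemma continuous_pt : Continuous fun z : ℝ × ℝ ↦ pt z.1 z.2 := by
  unfold pt
  fun_prop

lemma measurable_enorm_pt (f : 𝓢(EuclideanSpace ℝ (Fin 2), E)) :
    Measurable fun z : ℝ × ℝ ↦ ‖f (pt z.1 z.2)‖ₑ :=
  (f.continuous.comp continuous_pt).enorm.measurable

/-- The `L^p` quasi-norm of the restriction of `f` to the horizontal line at height `y`. -/
noncomputable def sliceNorm (p : ℝ) (f : 𝓢(EuclideanSpace ℝ (Fin 2), E)) (y : ℝ) : ℝ≥0∞ :=
  eLpNorm' (fun x ↦ ‖f (pt x y)‖ₑ) p volume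

lemma measurable_sliceNorm (p : ℝ) (f : 𝓢(EuclideanSpace ℝ (Fin 2), E)) :
    Measurable (sliceNorm p f) :=
  (((measurable_enorm_pt f).pow_const p).lintegral_prod_left').pow_const (1 / p)

lemma exists_lintegral_enorm_pt_rpow_le {p : ℝ} (hp : 0 < p)
    (f : 𝓢(EuclideanSpace ℝ (Fin 2), E)) :
    ∃ D : ℝ≥0, ∀ y, ∫⁻ x, ‖f (pt x y)‖ₑ ^ p ≤ D := by
  obtain ⟨C, hC⟩ := exists_enorm_le_mul_peetreWeight_norm_pow f ⌈2 / p⌉₊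
  have hn : 2 ≤ ⌈2 / p⌉₊ * p := (div_le_iff₀ hp).1 (Nat.le_ceil _)
  have hCp : (C : ℝ≥0∞) ^ p ≠ ∞ := ENNReal.rpow_ne_top_of_nonneg hp.le ENNReal.coe_ne_top
  refine ⟨(C ^ p * ∫⁻ x, peetreWeight x ^ 2).toNNReal, fun y ↦ ?_⟩
  rw [ENNReal.coe_toNNReal (ENNReal.mul_ne_top hCp lintegral_peetreWeight_sq_ne_top),
    ← lintegral_const_mul' _ _ hCp]
  refine lintegral_mono fun x ↦ ?_
  calc ‖f (pt x y)‖ₑ ^ p ≤ (C * peetreWeight x ^ ⌈2 / p⌉₊) ^ p := by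
        refine ENNReal.rpow_le_rpow ((hC _).trans ?_) hp.le
        gcongr
        exact peetreWeight_anti (by simpa using abs_fst_le_norm_pt x y)
    _ = C ^ p * peetreWeight x ^ (⌈2 / p⌉₊ * p) := by
        rw [ENNReal.mul_rpow_of_nonneg _ _ hp.le, ← ENNReal.rpow_natCast, ← ENNReal.rpow_mul]
    _ ≤ C ^ p * peetreWeight x ^ 2 := by
        rw [← ENNReal.rpow_two]
        gcongr _ * ?_
        exact ENNReal.rpow_le_rpow_of_exponent_ge (peetreWeight_le_one x) hn

end Plane

section BandLimited

variable {E : Type*} [NormedAddCommGroup E] [NormedSpace ℂ E] [CompleteSpace E]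

lemma exists_subReproducing_enorm_single (ι : Type*) [Fintype ι] [DecidableEq ι] :
    ∃ κ : ℕ → ℝ≥0, ∀ (f : 𝓢(EuclideanSpace ℝ ι, E)) (i : ι) (B : ℝ), 0 < B →
      (∀ ξ, 𝓕 (f : EuclideanSpace ℝ ι → E) ξ ≠ 0 → |ξ i| ≤ B) →
      ∀ x₀, SubReproducing κ fun t ↦ ‖f (x₀ + (B⁻¹ * t) • EuclideanSpace.single i (1 : ℝ))‖ₑ := by
  obtain ⟨κ, hκ⟩ := exists_subReproducing_enorm_line (V := EuclideanSpace ℝ ι) (E := E)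
  refine ⟨κ, fun f i B hB hf x₀ ↦ ?_⟩
  have h := hκ f (B⁻¹ • EuclideanSpace.single i (1 : ℝ)) (fun ξ hξ ↦ ?_) x₀
  · simpa only [smul_smul, mul_comm B⁻¹] using h
  · rw [inner_smul_right, EuclideanSpace.inner_single_right, abs_mul, abs_of_pos (inv_pos.2 hB)]
    simpa using (inv_mul_le_one₀ hB).2 (hf ξ hξ)

lemma exists_enorm_pt_le_mul_sliceNorm {p : ℝ} (hp : 0 < p) :
    ∃ K : ℝ≥0, ∀ (f : 𝓢(EuclideanSpace ℝ (Fin 2), E)) (B : ℝ), 0 < B →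
      (∀ ξ, 𝓕 (f : EuclideanSpace ℝ (Fin 2) → E) ξ ≠ 0 → |ξ 0| ≤ B) →
      ∀ x y, ‖f (pt x y)‖ₑ ≤ K * ENNReal.ofReal B ^ (1 / p) * sliceNorm p f y := by
  obtain ⟨κ, hκ⟩ := exists_subReproducing_enorm_single (E := E) (Fin 2)
  obtain ⟨K, hK⟩ := SubReproducing.exists_le_mul_eLpNorm'_of_dilation κ hp
  refine ⟨K, fun f B hB hf x y ↦ hK B (fun x ↦ ‖f (pt x y)‖ₑ) hB ?_ x⟩
  simpa only [← pt_eq_add_smul_single_zero] using hκ f 0 B hB hf (pt 0 y)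

lemma exists_sliceNorm_le_mul_eLpNorm' {p₁ p₂ : ℝ} (hp₁ : 0 < p₁) (hp₂ : 0 < p₂) :
    ∃ K : ℝ≥0, ∀ (f : 𝓢(EuclideanSpace ℝ (Fin 2), E)) (B : ℝ), 0 < B →
      (∀ ξ, 𝓕 (f : EuclideanSpace ℝ (Fin 2) → E) ξ ≠ 0 → |ξ 1| ≤ B) →
      ∀ y, sliceNorm p₁ f y
        ≤ K * ENNReal.ofReal B ^ (1 / p₂) * eLpNorm' (sliceNorm p₁ f) p₂ volume := by
  obtain ⟨κ, hκ⟩ := exists_subReproducing_enorm_single (E := E) (Fin 2)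
  obtain ⟨κ', hκ'⟩ := SubReproducing.exists_rpow κ hp₁
  obtain ⟨κ'', hκ''⟩ := SubReproducing.exists_rpow κ' (one_div_pos.2 hp₁)
  obtain ⟨K, hK⟩ := SubReproducing.exists_le_mul_eLpNorm'_of_dilation κ'' hp₂
  refine ⟨K, fun f B hB hf ↦ hK B (sliceNorm p₁ f) hB (hκ'' _ ?_)⟩
  obtain ⟨D, hD⟩ := exists_lintegral_enorm_pt_rpow_le hp₁ f
  refine SubReproducing.lintegral (F := fun t x ↦ ‖f (pt x (B⁻¹ * t))‖ₑ ^ p₁) ?_ (fun x ↦ ?_)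
    ⟨D, fun t ↦ hD _⟩
  · have swap_dilate : Measurable fun z : ℝ × ℝ ↦ (z.2, B⁻¹ * z.1) := by fun_prop
    exact ((measurable_enorm_pt f).comp swap_dilate).pow_const p₁
  · simpa only [← pt_eq_add_smul_single_one] using hκ' _ (hκ f 1 B hB hf (pt x 0))

end BandLimited

section MixedNorm

/-- The mixed `L_{(p₁,p₂)}` quasi-norm, with the inner norm taken in the first variable. -/
noncomputable def mixedNorm (p₁ p₂ : ℝ) (F : ℝ → ℝ → ℝ≥0∞) : ℝ≥0∞ :=
  eLpNorm' (fun y ↦ eLpNorm' (fun x ↦ F x y) p₁ volume) p₂ volume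

lemma mixedNorm_eq_lintegral (p₁ p₂ : ℝ) (F : ℝ → ℝ → ℝ≥0∞) :
    mixedNorm p₁ p₂ F = (∫⁻ y, (∫⁻ x, F x y ^ p₁) ^ (p₂ / p₁)) ^ (1 / p₂) := by
  simp only [mixedNorm, eLpNorm', enorm_eq_self, ← ENNReal.rpow_mul, one_div_mul_eq_div]

variable {E : Type*} [NormedAddCommGroup E] [NormedSpace ℂ E]

/-- The geometric rectangle condition on the Fourier supports of a sequence. -/
def GeometricRectangle (A R₁ R₂ : ℝ) (f : ℕ → 𝓢(EuclideanSpace ℝ (Fin 2), E)) : Prop :=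
  ∀ j : ℕ, Function.support (𝓕 (f j : EuclideanSpace ℝ (Fin 2) → E))
    ⊆ {ξ | |ξ 0| ≤ A * R₁ ^ (j : ℝ) ∧ |ξ 1| ≤ A * R₂ ^ (j : ℝ)}

lemma ofReal_mul_rpow_natCast_rpow {A R : ℝ} (hA : 0 < A) (hR : 0 < R) (j : ℕ) {s : ℝ}
    (hs : 0 ≤ s) :
    ENNReal.ofReal (A * R ^ (j : ℝ)) ^ s = ENNReal.ofReal A ^ s * ENNReal.ofReal R ^ (j * s) := by
  rw [ENNReal.ofReal_mul hA.le, ENNReal.mul_rpow_of_nonneg _ _ hs,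
    ← ENNReal.ofReal_rpow_of_pos hR, ← ENNReal.rpow_mul]

variable (E) [CompleteSpace E] {A R₁ R₂ p₁ p₂ r₁ r₂ q : ℝ}

lemma exists_enorm_pt_le_of_geometricRectangle (hA : 0 < A) (hR₁ : 0 < R₁) (hp₁ : 0 < p₁) :
    ∃ K : ℝ≥0∞, K ≠ ∞ ∧ ∀ (R₂ : ℝ) (f : ℕ → 𝓢(EuclideanSpace ℝ (Fin 2), E)),
      GeometricRectangle A R₁ R₂ f → ∀ (j : ℕ) (x y : ℝ),
        ‖f j (pt x y)‖ₑ ≤ K * ENNReal.ofReal R₁ ^ (j / p₁) * sliceNorm p₁ (f j) y := by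
  obtain ⟨K, hK⟩ := exists_enorm_pt_le_mul_sliceNorm (E := E) hp₁
  refine ⟨K * ENNReal.ofReal A ^ (1 / p₁), ?_, fun R₂ f hf j x y ↦ ?_⟩
  · finiteness
  · have h := hK (f j) (A * R₁ ^ (j : ℝ)) (by positivity) (fun ξ hξ ↦ (hf j hξ).1) x y
    rwa [ofReal_mul_rpow_natCast_rpow hA hR₁ j (by positivity), ← mul_assoc, mul_one_div] at h

lemma exists_sliceNorm_le_of_geometricRectangle (hA : 0 < A) (hR₂ : 0 < R₂) (hp₁ : 0 < p₁)
    (hp₂ : 0 < p₂) :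
    ∃ K : ℝ≥0∞, K ≠ ∞ ∧ ∀ (R₁ : ℝ) (f : ℕ → 𝓢(EuclideanSpace ℝ (Fin 2), E)),
      GeometricRectangle A R₁ R₂ f → ∀ (j : ℕ) (y : ℝ),
        sliceNorm p₁ (f j) y
          ≤ K * ENNReal.ofReal R₂ ^ (j / p₂) * eLpNorm' (sliceNorm p₁ (f j)) p₂ volume := by
  obtain ⟨K, hK⟩ := exists_sliceNorm_le_mul_eLpNorm' (E := E) hp₁ hp₂
  refine ⟨K * ENNReal.ofReal A ^ (1 / p₂), ?_, fun R₁ f hf j y ↦ ?_⟩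
  · finiteness
  · have h := hK (f j) (A * R₂ ^ (j : ℝ)) (by positivity) (fun ξ hξ ↦ (hf j hξ).2) y
    rwa [ofReal_mul_rpow_natCast_rpow hA hR₂ j (by positivity), ← mul_assoc, mul_one_div] at h

lemma exists_sliceNorm_le_mul_sliceNorm (hA : 0 < A) (hR₁ : 0 < R₁) (hp₁ : 0 < p₁)
    (h₁ : p₁ ≤ r₁) :
    ∃ K : ℝ≥0∞, K ≠ ∞ ∧ ∀ (R₂ : ℝ) (f : ℕ → 𝓢(EuclideanSpace ℝ (Fin 2), E)),
      GeometricRectangle A R₁ R₂ f → ∀ (j : ℕ) (y : ℝ),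
        sliceNorm r₁ (f j) y
          ≤ K * (ENNReal.ofReal R₁ ^ (j * (1 / p₁ - 1 / r₁)) * sliceNorm p₁ (f j) y) := by
  have hr₁ : 0 < r₁ := hp₁.trans_le h₁
  have hθ : 0 ≤ 1 - p₁ / r₁ := sub_nonneg.2 ((div_le_one hr₁).2 h₁)
  obtain ⟨K, hK, plancherel_polya⟩ := exists_enorm_pt_le_of_geometricRectangle E hA hR₁ hp₁
  refine ⟨K ^ (1 - p₁ / r₁), ENNReal.rpow_ne_top_of_nonneg hθ hK, fun R₂ f hf j y ↦ ?_⟩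
  have exponent : j / p₁ * (1 - p₁ / r₁) = j * (1 / p₁ - 1 / r₁) := by field_simp
  have h := eLpNorm'_le_of_forall_le_mul_eLpNorm' hp₁ h₁
    ((measurable_enorm_pt (f j)).comp measurable_prodMk_right).aemeasurable
    fun x ↦ plancherel_polya R₂ f hf j x y
  rwa [ENNReal.mul_rpow_of_nonneg _ _ hθ, ← ENNReal.rpow_mul, exponent, mul_assoc] at h

lemma exists_mixedNorm_ellNorm_le_of_fst_lt (hA : 0 < A) (hR₁ : 1 < R₁) (hp₁ : 0 < p₁)
    (h₁ : p₁ < r₁) (hp₂ : 0 < p₂) (hq : 0 < q) :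
    ∃ C : ℝ≥0∞, C ≠ ∞ ∧ ∀ (R₂ : ℝ) (f : ℕ → 𝓢(EuclideanSpace ℝ (Fin 2), E)),
      GeometricRectangle A R₁ R₂ f →
        mixedNorm r₁ p₂ (fun x y ↦ ellNorm q fun j ↦ ‖f j (pt x y)‖ₑ)
          ≤ C * mixedNorm p₁ p₂ fun x y ↦ ⨆ j : ℕ,
            ENNReal.ofReal R₁ ^ (j * (1 / p₁ - 1 / r₁)) * ‖f j (pt x y)‖ₑ := by
  obtain ⟨K, hK, plancherel_polya⟩ :=
    exists_enorm_pt_le_of_geometricRectangle E hA (one_pos.trans hR₁) hp₁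
  obtain ⟨C, hC, sequence_bound⟩ := exists_eLpNorm'_ellNorm_le_mul_eLpNorm'_iSup hp₁ h₁ hq
    (ENNReal.one_lt_ofReal.2 hR₁) ENNReal.ofReal_ne_top hK (volume : Measure ℝ)
  refine ⟨C, hC, fun R₂ f hf ↦ ?_⟩
  rw [mixedNorm, mixedNorm, ← eLpNorm'_const_mul hC _ hp₂]
  exact eLpNorm'_mono_of_le hp₂ fun y ↦ sequence_bound _
    (fun j ↦ (measurable_enorm_pt (f j)).comp measurable_prodMk_right)
    fun j x ↦ plancherel_polya R₂ f hf j x y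

lemma exists_eLpNorm'_ellNorm_le_mul_ellNorm_sliceNorm (hA : 0 < A) (hR₁ : 0 < R₁) (hp₁ : 0 < p₁)
    (h₁ : p₁ ≤ r₁) (hq : 0 < q) :
    ∃ K : ℝ≥0∞, K ≠ ∞ ∧ ∀ (R₂ : ℝ) (f : ℕ → 𝓢(EuclideanSpace ℝ (Fin 2), E)),
      GeometricRectangle A R₁ R₂ f → ∀ y,
        eLpNorm' (fun x ↦ ellNorm q fun j ↦ ‖f j (pt x y)‖ₑ) r₁ volume
          ≤ K * ellNorm (min q r₁) fun j ↦
            ENNReal.ofReal R₁ ^ (j * (1 / p₁ - 1 / r₁)) * sliceNorm p₁ (f j) y := by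
  have hr₁ : 0 < r₁ := hp₁.trans_le h₁
  have hu : 0 < min q r₁ := lt_min hq hr₁
  obtain ⟨K, hK, nikolskij⟩ := exists_sliceNorm_le_mul_sliceNorm E hA hR₁ hp₁ h₁
  refine ⟨K, hK, fun R₂ f hf y ↦ ?_⟩
  rw [← ellNorm_const_mul hu]
  calc eLpNorm' (fun x ↦ ellNorm q fun j ↦ ‖f j (pt x y)‖ₑ) r₁ volume
      ≤ ellNorm (min q r₁) fun j ↦ sliceNorm r₁ (f j) y :=
        eLpNorm'_ellNorm_le_ellNorm_eLpNorm' hq hr₁ fun j ↦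
          ((measurable_enorm_pt (f j)).comp measurable_prodMk_right).aemeasurable
    _ ≤ _ := ellNorm_mono hu fun j ↦ nikolskij R₂ f hf j y

lemma exists_eLpNorm'_ellNorm_sliceNorm_le_mixedNorm (hA : 0 < A) (hR₂ : 1 < R₂) (hp₁ : 0 < p₁)
    (hp₂ : 0 < p₂) (h₂ : p₂ < r₂) (hq : 0 < q) :
    ∃ C : ℝ≥0∞, C ≠ ∞ ∧ ∀ w : ℕ → ℝ≥0∞, (∀ j, w j ≠ ∞) →
      ∀ (R₁ : ℝ) (f : ℕ → 𝓢(EuclideanSpace ℝ (Fin 2), E)), GeometricRectangle A R₁ R₂ f →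
        eLpNorm' (fun y ↦ ellNorm q fun j ↦ w j * sliceNorm p₁ (f j) y) r₂ volume
          ≤ C * mixedNorm p₁ p₂ fun x y ↦ ⨆ j : ℕ,
            w j * ENNReal.ofReal R₂ ^ (j * (1 / p₂ - 1 / r₂)) * ‖f j (pt x y)‖ₑ := by
  have hδ : 0 ≤ 1 / p₂ - 1 / r₂ := sub_nonneg.2 (one_div_le_one_div_of_le hp₂ h₂.le)
  obtain ⟨K, hK, plancherel_polya⟩ :=
    exists_sliceNorm_le_of_geometricRectangle E hA (one_pos.trans hR₂) hp₁ hp₂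
  obtain ⟨C, hC, sequence_bound⟩ := exists_eLpNorm'_ellNorm_le_mul_eLpNorm'_iSup hp₂ h₂ hq
    (ENNReal.one_lt_ofReal.2 hR₂) ENNReal.ofReal_ne_top hK (volume : Measure ℝ)
  refine ⟨C, hC, fun w hw R₁ f hf ↦ ?_⟩
  set v : ℕ → ℝ≥0∞ := fun j ↦ ENNReal.ofReal R₂ ^ (j * (1 / p₂ - 1 / r₂))
  have hv (j : ℕ) : v j ≠ ∞ :=
    ENNReal.rpow_ne_top_of_nonneg (by positivity) ENNReal.ofReal_ne_top
  have weighted_plancherel_polya (j : ℕ) (y : ℝ) : w j * sliceNorm p₁ (f j) y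
      ≤ K * ENNReal.ofReal R₂ ^ (j / p₂)
        * eLpNorm' (fun y ↦ w j * sliceNorm p₁ (f j) y) p₂ volume := by
    rw [eLpNorm'_const_mul (hw j) _ hp₂, mul_left_comm]
    gcongr
    exact plancherel_polya R₁ f hf j y
  calc eLpNorm' (fun y ↦ ellNorm q fun j ↦ w j * sliceNorm p₁ (f j) y) r₂ volume
      ≤ C * eLpNorm' (fun y ↦ ⨆ j, v j * (w j * sliceNorm p₁ (f j) y)) p₂ volume :=
        sequence_bound _ (fun j ↦ (measurable_sliceNorm p₁ (f j)).const_mul _)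
          weighted_plancherel_polya
    _ ≤ C * mixedNorm p₁ p₂ fun x y ↦ ⨆ j, w j * v j * ‖f j (pt x y)‖ₑ := by
        gcongr
        refine eLpNorm'_mono_of_le hp₂ fun y ↦ ?_
        simp only [← mul_assoc, mul_comm (v _) (w _)]
        exact iSup_mul_eLpNorm'_le (fun j ↦ ENNReal.mul_ne_top (hw j) (hv j)) _ hp₁

lemma exists_mixedNorm_ellNorm_le_of_snd_lt (hA : 0 < A) (hR₁ : 0 < R₁) (hR₂ : 1 < R₂)
    (hp₁ : 0 < p₁) (h₁ : p₁ ≤ r₁) (hp₂ : 0 < p₂) (h₂ : p₂ < r₂) (hq : 0 < q) :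
    ∃ C : ℝ≥0∞, C ≠ ∞ ∧ ∀ f : ℕ → 𝓢(EuclideanSpace ℝ (Fin 2), E), GeometricRectangle A R₁ R₂ f →
      mixedNorm r₁ r₂ (fun x y ↦ ellNorm q fun j ↦ ‖f j (pt x y)‖ₑ)
        ≤ C * mixedNorm p₁ p₂ fun x y ↦ ⨆ j : ℕ,
          ENNReal.ofReal R₁ ^ (j * (1 / p₁ - 1 / r₁))
            * ENNReal.ofReal R₂ ^ (j * (1 / p₂ - 1 / r₂)) * ‖f j (pt x y)‖ₑ := by
  have hδ : 0 ≤ 1 / p₁ - 1 / r₁ := sub_nonneg.2 (one_div_le_one_div_of_le hp₁ h₁)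
  obtain ⟨K, hK, inner_bound⟩ :=
    exists_eLpNorm'_ellNorm_le_mul_ellNorm_sliceNorm E hA hR₁ hp₁ h₁ hq
  obtain ⟨C, hC, outer_bound⟩ := exists_eLpNorm'_ellNorm_sliceNorm_le_mixedNorm E hA hR₂ hp₁ hp₂ h₂
    (lt_min hq (hp₁.trans_le h₁))
  refine ⟨K * C, ENNReal.mul_ne_top hK hC, fun f hf ↦ ?_⟩
  set w : ℕ → ℝ≥0∞ := fun j ↦ ENNReal.ofReal R₁ ^ (j * (1 / p₁ - 1 / r₁))
  have hw (j : ℕ) : w j ≠ ∞ :=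
    ENNReal.rpow_ne_top_of_nonneg (by positivity) ENNReal.ofReal_ne_top
  calc mixedNorm r₁ r₂ (fun x y ↦ ellNorm q fun j ↦ ‖f j (pt x y)‖ₑ)
      ≤ K * eLpNorm' (fun y ↦ ellNorm (min q r₁) fun j ↦ w j * sliceNorm p₁ (f j) y) r₂
          volume := by
        rw [← eLpNorm'_const_mul hK _ (hp₂.trans h₂)]
        exact eLpNorm'_mono_of_le (hp₂.trans h₂) (inner_bound R₂ f hf)
    _ ≤ K * (C * _) := by
        gcongr
        exact outer_bound w hw R₁ f hf
    _ = _ := (mul_assoc _ _ _).symm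

end MixedNorm

theorem stmt8_general (E : Type*) [NormedAddCommGroup E] [NormedSpace ℂ E] [CompleteSpace E]
    (p₁ p₂ r₁ r₂ : ℝ) (hp₁ : 0 < p₁) (hp₂ : 0 < p₂) (h₁ : p₁ ≤ r₁) (q : ℝ) (hq : 0 < q)
    (A : ℝ) (hA : 0 < A) (R₁ R₂ : ℝ) (hR₁ : 0 < R₁) (hR₂ : 0 < R₂)
    (h : p₂ < r₂ ∧ 1 < R₂ ∨ p₂ = r₂ ∧ p₁ < r₁ ∧ 1 < R₁) :
    ∃ c : ℝ≥0∞, 0 < c ∧ c ≠ ∞ ∧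
      ∀ f : ℕ → 𝓢(EuclideanSpace ℝ (Fin 2), E),
        (∀ j : ℕ, Function.support (𝓕 (f j : EuclideanSpace ℝ (Fin 2) → E))
          ⊆ {ξ : EuclideanSpace ℝ (Fin 2) | |ξ 0| ≤ A * R₁ ^ (j:ℝ) ∧ |ξ 1| ≤ A * R₂ ^ (j:ℝ)}) →
        (∫⁻ x₂ : ℝ, (∫⁻ x₁ : ℝ,
              (∑' j : ℕ, (‖f j (pt x₁ x₂)‖₊ : ℝ≥0∞) ^ q) ^ (r₁ / q)) ^ (r₂ / r₁)) ^ (1 / r₂)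
          ≤ c * (∫⁻ x₂ : ℝ, (∫⁻ x₁ : ℝ,
              (⨆ j : ℕ, ENNReal.ofReal (R₁ ^ ((j:ℝ) * (1 / p₁ - 1 / r₁)))
                * ENNReal.ofReal (R₂ ^ ((j:ℝ) * (1 / p₂ - 1 / r₂)))
                * (‖f j (pt x₁ x₂)‖₊ : ℝ≥0∞)) ^ p₁) ^ (p₂ / p₁)) ^ (1 / p₂) := by
  obtain ⟨C, hC, bound⟩ : ∃ C : ℝ≥0∞, C ≠ ∞ ∧ ∀ f : ℕ → 𝓢(EuclideanSpace ℝ (Fin 2), E),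
      GeometricRectangle A R₁ R₂ f →
      mixedNorm r₁ r₂ (fun x y ↦ ellNorm q fun j ↦ ‖f j (pt x y)‖ₑ)
        ≤ C * mixedNorm p₁ p₂ fun x y ↦ ⨆ j : ℕ,
          ENNReal.ofReal R₁ ^ (j * (1 / p₁ - 1 / r₁))
            * ENNReal.ofReal R₂ ^ (j * (1 / p₂ - 1 / r₂)) * ‖f j (pt x y)‖ₑ := by
    obtain ⟨h₂, hR₂⟩ | ⟨rfl, h₁, hR₁⟩ := h
    · exact exists_mixedNorm_ellNorm_le_of_snd_lt E hA hR₁ hR₂ hp₁ h₁ hp₂ h₂ hq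
    · obtain ⟨C, hC, bound⟩ := exists_mixedNorm_ellNorm_le_of_fst_lt E hA hR₁ hp₁ h₁ hp₂ hq
      exact ⟨C, hC, fun f hf ↦ by simpa using bound R₂ f hf⟩
  refine ⟨C + 1, by positivity, by finiteness, fun f hf ↦ ?_⟩
  have h := (bound f hf).trans (mul_le_mul_left le_self_add _ : _ ≤ (C + 1) * _)
  simpa only [mixedNorm_eq_lintegral, ellNorm, enorm_eq_nnnorm, ← ENNReal.rpow_mul,
    one_div_mul_eq_div, ENNReal.ofReal_rpow_of_pos hR₁, ENNReal.ofReal_rpow_of_pos hR₂] using h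

/-- Sequence Nikol'skij–Plancherel–Polya inequality with mixed norms in two variables,
under the geometric rectangle condition `supp 𝓕f_j ⊆ [-A R₁^j, A R₁^j] × [-A R₂^j, A R₂^j]`. -/
theorem stmt8 (p₁ p₂ r₁ r₂ : ℝ) (hp₁ : 0 < p₁) (hp₂ : 0 < p₂)
    (h₁ : p₁ ≤ r₁) (h₂ : p₂ ≤ r₂) (hne : (p₁, p₂) ≠ (r₁, r₂))
    (q : ℝ) (hq : 0 < q) (A : ℝ) (hA : 0 < A)
    (R₁ R₂ : ℝ) (hR₁ : 1 < R₁) (hR₂ : 1 < R₂) :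
    ∃ c : ℝ≥0∞, 0 < c ∧ c ≠ ∞ ∧
      ∀ f : ℕ → 𝓢(EuclideanSpace ℝ (Fin 2), ℂ),
        (∀ j : ℕ, Function.support (𝓕 (f j : EuclideanSpace ℝ (Fin 2) → ℂ))
          ⊆ {ξ : EuclideanSpace ℝ (Fin 2) | |ξ 0| ≤ A * R₁ ^ (j:ℝ) ∧ |ξ 1| ≤ A * R₂ ^ (j:ℝ)}) →
        (∫⁻ x₂ : ℝ, (∫⁻ x₁ : ℝ,
              (∑' j : ℕ, (‖f j (pt x₁ x₂)‖₊ : ℝ≥0∞) ^ q) ^ (r₁ / q)) ^ (r₂ / r₁)) ^ (1 / r₂)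
          ≤ c * (∫⁻ x₂ : ℝ, (∫⁻ x₁ : ℝ,
              (⨆ j : ℕ, ENNReal.ofReal (R₁ ^ ((j:ℝ) * (1 / p₁ - 1 / r₁)))
                * ENNReal.ofReal (R₂ ^ ((j:ℝ) * (1 / p₂ - 1 / r₂)))
                * (‖f j (pt x₁ x₂)‖₊ : ℝ≥0∞)) ^ p₁) ^ (p₂ / p₁)) ^ (1 / p₂) := by
  refine stmt8_general ℂ p₁ p₂ r₁ r₂ hp₁ hp₂ h₁ q hq A hA R₁ R₂ (by linarith) (by linarith) ?_
  grind
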